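/- For every x ∈ X_or and every input vector u ∈ ℝ^M, the vector A.mulVec x + B.mulVec u belongs to X_or. In particular, along the dynamics ẋ = Ax + Bu, if the states of all nodes in each cluster coincide at some instant, then so do their derivatives. -/

import Mathlib

open Matrix

/-- The `N × N` permutation matrix of a permutation `σ` of `Fin N`, with the convention
`(permMat N σ).mulVec x i = x (σ⁻¹ i)`. -/
def permMat (N : ℕ) (σ : Equiv.Perm (Fin N)) : Matrix (Fin N) (Fin N) ℝ :=
  Matrix.of fun i j => if σ j = i then (1 : ℝ) else 0

/-- The group-consensus subspace: vectors that are constant on each orbit of the natural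
action of the subgroup `G` of permutations of `Fin N`. -/
def consensusSet (N : ℕ) (G : Subgroup (Equiv.Perm (Fin N))) : Set (Fin N → ℝ) :=
  {x | ∀ i j : Fin N, (∃ σ ∈ G, σ i = j) → x i = x j}

section FixedVectors

variable {ι κ R : Type*} [Fintype ι] [NonUnitalSemiring R]

/-- The vectors fixed by every matrix in `S`. When `S` consists of the permutation matrices of a
group, these are the vectors that are constant on the orbits of the group. -/
def fixedVectors (S : Set (Matrix ι ι R)) : Set (ι → R) :=
  {x | ∀ P ∈ S, P *ᵥ x = x}

theorem consensus_subspace_dynamics_invariant_general [Fintype κ] {S : Set (Matrix ι ι R)}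
    {A : Matrix ι ι R} {B : Matrix ι κ R} (hA : ∀ P ∈ S, Commute P A) (hB : ∀ P ∈ S, P * B = B)
    {x : ι → R} (hx : x ∈ fixedVectors S) (u : κ → R) :
    A *ᵥ x + B *ᵥ u ∈ fixedVectors S := by
  intro P hP
  calc
    P *ᵥ (A *ᵥ x + B *ᵥ u) = (P * A) *ᵥ x + (P * B) *ᵥ u := by
      rw [mulVec_add, mulVec_mulVec, mulVec_mulVec]
    _ = A *ᵥ (P *ᵥ x) + B *ᵥ u := by rw [(hA P hP).eq, hB P hP, mulVec_mulVec]
    _ = A *ᵥ x + B *ᵥ u := by rw [hx P hP]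

end FixedVectors

section PermMat

variable {N : ℕ} (σ : Equiv.Perm (Fin N))

theorem permMat_eq_permMatrix_inv : permMat N σ = σ⁻¹.permMatrix ℝ := by
  ext i j
  simp [permMat, Equiv.Perm.permMatrix, PEquiv.toMatrix_apply, Equiv.symm_apply_eq,
    eq_comm (a := i)]

theorem permMat_mulVec (x : Fin N → ℝ) : permMat N σ *ᵥ x = x ∘ σ.symm := by
  rw [permMat_eq_permMatrix_inv, permMatrix_mulVec, Equiv.Perm.inv_def]

theorem permMat_mulVec_eq_self_iff {x : Fin N → ℝ} :
    permMat N σ *ᵥ x = x ↔ ∀ i, x i = x (σ i) := by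
  rw [permMat_mulVec, Equiv.comp_symm_eq, funext_iff]
  rfl

end PermMat

theorem consensusSet_eq_fixedVectors (N : ℕ) (G : Subgroup (Equiv.Perm (Fin N))) :
    consensusSet N G = fixedVectors (permMat N '' G) := by
  ext x
  simp only [fixedVectors, Set.mem_ofPred_eq, Set.forall_mem_image, permMat_mulVec_eq_self_iff]
  constructor
  · intro hx σ hσ i
    exact hx i (σ i) ⟨σ, hσ, rfl⟩
  · rintro hx i _ ⟨σ, hσ, rfl⟩
    exact hx hσ i

/-- For every `x ∈ X_or` and every input `u`, the vector `A.mulVec x + B.mulVec u`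
belongs to `X_or`: along `ẋ = Ax + Bu`, if the states of all nodes in each cluster coincide,
then so do their derivatives. -/
theorem consensus_subspace_dynamics_invariant (N M : ℕ) (A : Matrix (Fin N) (Fin N) ℝ)
    (B : Matrix (Fin N) (Fin M) ℝ) (G : Subgroup (Equiv.Perm (Fin N)))
    (hA : ∀ σ ∈ G, permMat N σ * A = A * permMat N σ)
    (hB : ∀ σ ∈ G, permMat N σ * B = B)
    (x : Fin N → ℝ) (hx : x ∈ consensusSet N G) (u : Fin M → ℝ) :
    A.mulVec x + B.mulVec u ∈ consensusSet N G := by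
  rw [consensusSet_eq_fixedVectors] at hx ⊢
  exact consensus_subspace_dynamics_invariant_general (Set.forall_mem_image.2 hA)
    (Set.forall_mem_image.2 hB) hx u
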